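/- arXiv:2411.06573 — 4 statements merged into one kernel-verified Lean document; each statement's English description precedes it below -/
import Mathlib

section
/- Let η > 0, T ≥ 1, and let r : ℕ → ℝ, G : ℕ → ℝⁿ, F : ℕ → ℝ satisfy r_0 ≥ 0, F_t > 0, F_t² ≤ B for all t, and the SAV recursion r_{t+1} = r_t / (1 + η·‖G_t‖²/(2F_t²)). Then ∑_{t=0}^{T−1} r_{t+1}·‖G_t‖² ≤ (2B/η)·r_0. -/
set_option autoImplicit false

/-!
With `a t = η ‖G t‖² / (2 (F t)²)` the recursion reads `r (t + 1) * (1 + a t) = r t`, so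
`r (t + 1) * a t` is the decrement `r t - r (t + 1)` and `∑ r (t + 1) * a t` telescopes to at most
`r 0`. The bound `(F t)² ≤ B` says that `‖G t‖² ≤ (2B/η) * a t`.
-/

section DivOneAddRecursion

variable {K : Type*} [Field K] {r a : ℕ → K}

theorem sum_range_succ_mul_eq_sub_of_div_one_add (ha : ∀ t, 1 + a t ≠ 0)
    (hrec : ∀ t, r (t + 1) = r t / (1 + a t)) (T : ℕ) :
    ∑ t ∈ Finset.range T, r (t + 1) * a t = r 0 - r T := by
  have decrement (t : ℕ) : r (t + 1) * a t = r t - r (t + 1) := by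
    have := (eq_div_iff (ha t)).mp (hrec t)
    linear_combination this
  simp only [decrement, Finset.sum_range_sub']

variable [LinearOrder K] [IsStrictOrderedRing K]

theorem nonneg_of_div_one_add (hr0 : 0 ≤ r 0) (ha : ∀ t, 0 ≤ a t)
    (hrec : ∀ t, r (t + 1) = r t / (1 + a t)) (t : ℕ) : 0 ≤ r t := by
  induction t with
  | zero => exact hr0
  | succ t ih => exact hrec t ▸ div_nonneg ih (add_nonneg zero_le_one (ha t))

theorem sum_range_succ_mul_le_of_div_one_add (hr0 : 0 ≤ r 0) (ha : ∀ t, 0 ≤ a t)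
    (hrec : ∀ t, r (t + 1) = r t / (1 + a t)) (T : ℕ) :
    ∑ t ∈ Finset.range T, r (t + 1) * a t ≤ r 0 := by
  rw [sum_range_succ_mul_eq_sub_of_div_one_add
    (fun t => (add_pos_of_pos_of_nonneg one_pos (ha t)).ne') hrec]
  exact sub_le_self _ (nonneg_of_div_one_add hr0 ha hrec T)

theorem sum_range_succ_mul_le_mul_of_div_one_add {s : ℕ → K} {C : K} (hC : 0 ≤ C)
    (hs : ∀ t, s t ≤ C * a t) (hr0 : 0 ≤ r 0) (ha : ∀ t, 0 ≤ a t)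
    (hrec : ∀ t, r (t + 1) = r t / (1 + a t)) (T : ℕ) :
    ∑ t ∈ Finset.range T, r (t + 1) * s t ≤ C * r 0 := by
  have hr := nonneg_of_div_one_add hr0 ha hrec
  calc ∑ t ∈ Finset.range T, r (t + 1) * s t
      ≤ ∑ t ∈ Finset.range T, r (t + 1) * (C * a t) :=
        Finset.sum_le_sum fun t _ => mul_le_mul_of_nonneg_left (hs t) (hr (t + 1))
    _ = C * ∑ t ∈ Finset.range T, r (t + 1) * a t := by
        simp only [mul_left_comm _ C, Finset.mul_sum]
    _ ≤ C * r 0 :=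
        mul_le_mul_of_nonneg_left (sum_range_succ_mul_le_of_div_one_add hr0 ha hrec T) hC

end DivOneAddRecursion

theorem sav_sum_r_gradsq_bound_general {E : Type*} [Norm E] {η B : ℝ} (hη : 0 < η)
    {r : ℕ → ℝ} {G : ℕ → E} {F : ℕ → ℝ} (hr0 : 0 ≤ r 0) (hF : ∀ t, F t ≠ 0)
    (hFB : ∀ t, (F t) ^ 2 ≤ B)
    (hrec : ∀ t, r (t + 1) = r t / (1 + η * ‖G t‖ ^ 2 / (2 * (F t) ^ 2))) (T : ℕ) :
    ∑ t ∈ Finset.range T, r (t + 1) * ‖G t‖ ^ 2 ≤ (2 * B / η) * r 0 := by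
  have hB : 0 ≤ B := (sq_nonneg (F 0)).trans (hFB 0)
  have gradsq_le (t : ℕ) :
      ‖G t‖ ^ 2 ≤ 2 * B / η * (η * ‖G t‖ ^ 2 / (2 * (F t) ^ 2)) := by
    have := hF t
    calc ‖G t‖ ^ 2 = 2 * (F t) ^ 2 / η * (η * ‖G t‖ ^ 2 / (2 * (F t) ^ 2)) := by field_simp
      _ ≤ 2 * B / η * (η * ‖G t‖ ^ 2 / (2 * (F t) ^ 2)) := by
        gcongr
        exact hFB t
  exact sum_range_succ_mul_le_mul_of_div_one_add (by positivity) gradsq_le hr0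
    (fun t => by positivity) hrec T

/-- Bound `C` in the SAV convergence proof: `∑_{t=0}^{T-1} r_{t+1} ‖G_t‖² ≤ (2B/η) r_0`. -/
theorem sav_sum_r_gradsq_bound {n : ℕ} (η B : ℝ) (hη : 0 < η) (T : ℕ) (hT : 1 ≤ T)
    (r : ℕ → ℝ) (G : ℕ → EuclideanSpace ℝ (Fin n)) (F : ℕ → ℝ)
    (hr0 : 0 ≤ r 0) (hF : ∀ t, 0 < F t) (hFB : ∀ t, (F t) ^ 2 ≤ B)
    (hrec : ∀ t, r (t + 1) = r t / (1 + η * ‖G t‖ ^ 2 / (2 * (F t) ^ 2))) :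
    ∑ t ∈ Finset.range T, r (t + 1) * ‖G t‖ ^ 2 ≤ (2 * B / η) * r 0 :=
  sav_sum_r_gradsq_bound_general hη hr0 (fun t => (hF t).ne') hFB hrec T
end

section
/- Let η > 0, T ≥ 1, 0 < a ≤ B, and let r : ℕ → ℝ, G : ℕ → ℝⁿ, F : ℕ → ℝ satisfy r_0 ≥ 0, a ≤ F_t² ≤ B for all t, and the SAV recursion r_{t+1} = r_t / (1 + η·‖G_t‖²/(2F_t²)). Then ∑_{t=0}^{T−1} ρ_t²·‖G_t‖² ≤ (2 B r_0²)/(a η), where ρ_t = r_{t+1}/F_t. -/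
set_option autoImplicit false

/-!
The closed-form recursion is the solved form of the implicit update `2 F (r - s) = η ρ g²` with
`s = ρ F`, where `s` is the new value of `r` and `g = ‖G‖`. Multiplying it by `ρ` turns the left
side into `2 s (r - s) = r² - s² - (r - s)²`, so each step dissipates exactly
`η ρ² g² + (r - s)²` of the energy `r²`. Summation telescopes, and hence `∑ ρ² g² ≤ r₀² / η`.
-/

theorem sav_step_energy_identity {R : Type*} [CommRing R] {η r s f g ρ : R}
    (hρ : s = ρ * f) (hupdate : 2 * f * (r - s) = η * ρ * g ^ 2) :
    η * (ρ ^ 2 * g ^ 2) + (r - s) ^ 2 = r ^ 2 - s ^ 2 := by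
  have hdissipation : η * (ρ ^ 2 * g ^ 2) = 2 * s * (r - s) :=
    calc η * (ρ ^ 2 * g ^ 2) = ρ * (η * ρ * g ^ 2) := by ring
      _ = ρ * (2 * f * (r - s)) := by rw [hupdate]
      _ = 2 * s * (r - s) := by rw [hρ]; ring
  rw [hdissipation]
  ring

theorem sav_sum_energy_identity {R : Type*} [CommRing R] {η : R} {r F g ρ : ℕ → R}
    (hρ : ∀ t, r (t + 1) = ρ t * F t)
    (hupdate : ∀ t, 2 * F t * (r t - r (t + 1)) = η * ρ t * g t ^ 2) (T : ℕ) :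
    η * ∑ t ∈ Finset.range T, ρ t ^ 2 * g t ^ 2 +
      ∑ t ∈ Finset.range T, (r t - r (t + 1)) ^ 2 = r 0 ^ 2 - r T ^ 2 := by
  rw [Finset.mul_sum, ← Finset.sum_add_distrib, ← Finset.sum_range_sub' (fun t ↦ r t ^ 2)]
  exact Finset.sum_congr rfl fun t _ ↦ sav_step_energy_identity (hρ t) (hupdate t)

theorem sav_implicit_update_of_eq_div {K : Type*} [Field K] [LinearOrder K]
    [IsStrictOrderedRing K] {η r s f g : K} (hη : 0 ≤ η) (hf : f ≠ 0)
    (hs : s = r / (1 + η * g ^ 2 / (2 * f ^ 2))) :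
    2 * f * (r - s) = η * (s / f) * g ^ 2 := by
  have hr : s * (1 + η * g ^ 2 / (2 * f ^ 2)) = r := (eq_div_iff (by positivity)).mp hs
  rw [← hr]
  field_simp
  ring

theorem sav_sum_rho_sq_gradsq_bound_general {K : Type*} [Field K] [LinearOrder K]
    [IsStrictOrderedRing K] {η : K} (hη : 0 < η) {r g F : ℕ → K} (hF : ∀ t, F t ≠ 0)
    (hrec : ∀ t, r (t + 1) = r t / (1 + η * g t ^ 2 / (2 * F t ^ 2))) (T : ℕ) :
    ∑ t ∈ Finset.range T, (r (t + 1) / F t) ^ 2 * g t ^ 2 ≤ r 0 ^ 2 / η := by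
  have henergy := sav_sum_energy_identity (fun t ↦ (div_mul_cancel₀ (r (t + 1)) (hF t)).symm)
    (fun t ↦ sav_implicit_update_of_eq_div hη.le (hF t) (hrec t)) T
  have hincrements : 0 ≤ ∑ t ∈ Finset.range T, (r t - r (t + 1)) ^ 2 :=
    Finset.sum_nonneg fun t _ ↦ sq_nonneg _
  rw [le_div_iff₀' hη]
  linarith [sq_nonneg (r T)]

/-- Bound `E` in the SAV convergence proof:
`∑_{t=0}^{T-1} ρ_t² ‖G_t‖² ≤ 2 B r_0² / (a η)` where `ρ_t = r_{t+1}/F_t`. -/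
theorem sav_sum_rho_sq_gradsq_bound {n : ℕ} (η a B : ℝ) (hη : 0 < η) (T : ℕ) (hT : 1 ≤ T)
    (ha : 0 < a) (haB : a ≤ B)
    (r : ℕ → ℝ) (G : ℕ → EuclideanSpace ℝ (Fin n)) (F : ℕ → ℝ)
    (hr0 : 0 ≤ r 0) (hFa : ∀ t, a ≤ (F t) ^ 2) (hFB : ∀ t, (F t) ^ 2 ≤ B)
    (hF : ∀ t, 0 < F t)
    (hrec : ∀ t, r (t + 1) = r t / (1 + η * ‖G t‖ ^ 2 / (2 * (F t) ^ 2))) :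
    ∑ t ∈ Finset.range T, (r (t + 1) / F t) ^ 2 * ‖G t‖ ^ 2 ≤ 2 * B * (r 0) ^ 2 / (a * η) := by
  calc
    _ ≤ r 0 ^ 2 / η := sav_sum_rho_sq_gradsq_bound_general hη (fun t ↦ (hF t).ne') hrec T
    _ = a * r 0 ^ 2 / (a * η) := (mul_div_mul_left _ _ ha.ne').symm
    _ ≤ 2 * B * r 0 ^ 2 / (a * η) := by gcongr; linarith
end

section
/- Let s, r̃, w ∈ ℝ, ψ > 0, Δt > 0, and define a = (s − r̃)², b = 2s(r̃ − s), c = s² − r̃² − (ψ/Δt)·w². Assume a > 0 (i.e., r̃ ≠ s). Then ω₀ := max{(−b − √(b² − 4ac))/(2a), 0} lies in [0,1], satisfies a·ω₀² + b·ω₀ + c ≤ 0, and ω₀ ≤ ω for every ω ∈ [0,1] with a·ω² + b·ω + c ≤ 0; i.e., ω₀ is the smallest feasible relaxation parameter. -/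
set_option autoImplicit false

/-!
An upward-opening quadratic with real roots is nonpositive exactly on the interval between them,
so its feasible points in `[l, u]` form the intersection of two intervals. If `u` is feasible, this
intersection is nonempty and its least element is the larger of the two left endpoints. In the
relaxed-SAV constraint `ω = 1` is feasible, because `a + b + c = -(ψ / Δt) * w ^ 2`.
-/

section QuadraticInequality

open Set

theorem discrim_nonneg_of_quadratic_nonpos {R : Type*} [CommRing R] [LinearOrder R]
    [IsStrictOrderedRing R] {a b c x : R} (ha : 0 ≤ a) (hx : a * x ^ 2 + b * x + c ≤ 0) :
    0 ≤ discrim a b c := by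
  have complete_square :
      discrim a b c = (2 * a * x + b) ^ 2 - 4 * a * (a * x ^ 2 + b * x + c) := by
    rw [discrim]
    ring
  have h_nonpos : 4 * a * (a * x ^ 2 + b * x + c) ≤ 0 :=
    mul_nonpos_of_nonneg_of_nonpos (by positivity) hx
  rw [complete_square]
  exact sub_nonneg_of_le (h_nonpos.trans (sq_nonneg _))

variable {K : Type*} [Field K]

theorem quadratic_eq_mul_sub_mul_sub [NeZero (2 : K)] {a b c r : K} (ha : a ≠ 0)
    (hr : discrim a b c = r * r) (x : K) :
    a * x ^ 2 + b * x + c = a * ((x - (-b - r) / (2 * a)) * (x - (-b + r) / (2 * a))) := by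
  have h_two : (2 : K) ≠ 0 := two_ne_zero
  rw [discrim] at hr
  field_simp
  linear_combination -hr

variable [LinearOrder K] [IsStrictOrderedRing K] {a b c r : K}

theorem quadratic_nonpos_iff_mem_Icc (ha : 0 < a) (hr₀ : 0 ≤ r)
    (hr : discrim a b c = r * r) (x : K) :
    a * x ^ 2 + b * x + c ≤ 0 ↔ x ∈ Icc ((-b - r) / (2 * a)) ((-b + r) / (2 * a)) := by
  have roots_le : (-b - r) / (2 * a) ≤ (-b + r) / (2 * a) := by
    gcongr
    linarith
  rw [quadratic_eq_mul_sub_mul_sub ha.ne' hr, ← le_div_iff₀' ha, zero_div,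
    sub_mul_sub_nonpos_iff x roots_le, mem_Icc]

theorem isLeast_Icc_quadratic_nonpos {l u : K} (ha : 0 < a) (hr₀ : 0 ≤ r)
    (hr : discrim a b c = r * r) (hlu : l ≤ u) (hu : a * u ^ 2 + b * u + c ≤ 0) :
    IsLeast {x ∈ Icc l u | a * x ^ 2 + b * x + c ≤ 0} (max ((-b - r) / (2 * a)) l) := by
  have feasible_eq : {x ∈ Icc l u | a * x ^ 2 + b * x + c ≤ 0} =
      Icc (max ((-b - r) / (2 * a)) l) (min ((-b + r) / (2 * a)) u) := by
    simp_rw [quadratic_nonpos_iff_mem_Icc ha hr₀ hr, sep_mem_eq]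
    rw [inter_comm, Icc_inter_Icc]
  have feasible_nonempty : {x ∈ Icc l u | a * x ^ 2 + b * x + c ≤ 0}.Nonempty :=
    ⟨u, right_mem_Icc.mpr hlu, hu⟩
  rw [feasible_eq] at feasible_nonempty ⊢
  exact isLeast_Icc (nonempty_Icc.mp feasible_nonempty)

end QuadraticInequality

/-- The explicit formula `ω₀ = max{(-b - √(b² - 4ac))/(2a), 0}` gives the smallest
feasible relaxation parameter in `[0,1]` for the relaxed-SAV constraint. -/
theorem rsav_omega_zero_optimal (s rt w ψ Δt a b c : ℝ) (hψ : 0 < ψ) (hΔt : 0 < Δt)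
    (ha : a = (s - rt) ^ 2) (hb : b = 2 * s * (rt - s))
    (hc : c = s ^ 2 - rt ^ 2 - (ψ / Δt) * w ^ 2) (hapos : 0 < a) :
    max ((-b - Real.sqrt (b ^ 2 - 4 * a * c)) / (2 * a)) 0 ∈ Set.Icc (0 : ℝ) 1 ∧
      a * (max ((-b - Real.sqrt (b ^ 2 - 4 * a * c)) / (2 * a)) 0) ^ 2 +
        b * (max ((-b - Real.sqrt (b ^ 2 - 4 * a * c)) / (2 * a)) 0) + c ≤ 0 ∧
      ∀ ω ∈ Set.Icc (0 : ℝ) 1, a * ω ^ 2 + b * ω + c ≤ 0 →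
        max ((-b - Real.sqrt (b ^ 2 - 4 * a * c)) / (2 * a)) 0 ≤ ω := by
  have value_at_one : a * 1 ^ 2 + b * 1 + c = -((ψ / Δt) * w ^ 2) := by
    rw [ha, hb, hc]
    ring
  have one_feasible : a * 1 ^ 2 + b * 1 + c ≤ 0 := by
    rw [value_at_one, neg_nonpos]
    positivity
  have hD : 0 ≤ discrim a b c := discrim_nonneg_of_quadratic_nonpos hapos.le one_feasible
  obtain ⟨⟨h_mem, h_feasible⟩, h_least⟩ := isLeast_Icc_quadratic_nonpos hapos
    (Real.sqrt_nonneg _) (Real.mul_self_sqrt hD).symm zero_le_one one_feasible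
  exact ⟨h_mem, h_feasible, fun ω hω hω_feasible ↦ h_least ⟨hω, hω_feasible⟩⟩
end

section
/- Let f : ℝⁿ → ℝ be differentiable with L-Lipschitz gradient (‖∇f(x) − ∇f(y)‖ ≤ L‖x − y‖ for all x, y), let c ∈ ℝ, γ > 0, a > 0, and assume ‖∇f(x)‖ ≤ γ and f(x) + c ≥ a for all x. Then F(x) = √(f(x)+c) has Lipschitz gradient with constant L_F = (1/(2√a))·(L + γ²/(2a)): for all x, y ∈ ℝⁿ, ‖∇F(x) − ∇F(y)‖ ≤ L_F·‖x − y‖. -/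
set_option autoImplicit false

/-!
The derivative of `√(f + c)` is `f' / (2√(f + c))`. Its variation splits into that of `f'`, weighted
by at most `1 / (2√a)`, and that of the scalar weight, times `‖f'‖ ≤ γ`. As `u ↦ 1 / (2√u)` is
`1 / (4a√a)`-Lipschitz on `[a, ∞)` and `f` is itself `γ`-Lipschitz, the second part contributes
`γ² / (4a√a)`.
-/

section RealSqrt

variable {a u v : ℝ}

theorem abs_sqrt_sub_sqrt_le (ha : 0 < a) (hu : a ≤ u) (hv : a ≤ v) :
    |√u - √v| ≤ |u - v| / (2 * √a) := by
  have hfactor : u - v = (√u - √v) * (√u + √v) := by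
    linear_combination Real.sq_sqrt (ha.le.trans hv) - Real.sq_sqrt (ha.le.trans hu)
  have hsum : 2 * √a ≤ √u + √v := by
    linarith [Real.sqrt_le_sqrt hu, Real.sqrt_le_sqrt hv]
  rw [le_div_iff₀ (mul_pos two_pos (Real.sqrt_pos.2 ha)), hfactor, abs_mul,
    abs_of_nonneg (by positivity : 0 ≤ √u + √v)]
  gcongr

theorem abs_inv_sqrt_sub_inv_sqrt_le (ha : 0 < a) (hu : a ≤ u) (hv : a ≤ v) :
    |(√u)⁻¹ - (√v)⁻¹| ≤ |u - v| / (2 * a * √a) := by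
  have hsqrt_u : 0 < √u := Real.sqrt_pos.2 (ha.trans_le hu)
  have hsqrt_v : 0 < √v := Real.sqrt_pos.2 (ha.trans_le hv)
  have hprod : a ≤ √u * √v := by
    calc a = √a * √a := (Real.mul_self_sqrt ha.le).symm
      _ ≤ √u * √v := by gcongr
  calc |(√u)⁻¹ - (√v)⁻¹| = |√u - √v| / (√u * √v) := by
        rw [inv_sub_inv hsqrt_u.ne' hsqrt_v.ne', abs_div, abs_sub_comm,
          abs_of_pos (mul_pos hsqrt_u hsqrt_v)]
    _ ≤ |u - v| / (2 * √a) / a := by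
        gcongr
        exact abs_sqrt_sub_sqrt_le ha hu hv
    _ = |u - v| / (2 * a * √a) := by
        rw [div_div, mul_right_comm]

end RealSqrt

theorem norm_smul_sub_smul_le {𝕜 E : Type*} [SeminormedRing 𝕜] [SeminormedAddCommGroup E]
    [Module 𝕜 E] [IsBoundedSMul 𝕜 E] (r s : 𝕜) (u v : E) :
    ‖r • u - s • v‖ ≤ ‖r‖ * ‖u - v‖ + ‖r - s‖ * ‖v‖ :=
  calc ‖r • u - s • v‖ = ‖r • (u - v) + (r - s) • v‖ := by
        rw [smul_sub, sub_smul, sub_add_sub_cancel]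
    _ ≤ ‖r‖ * ‖u - v‖ + ‖r - s‖ * ‖v‖ :=
        norm_add_le_of_le (norm_smul_le _ _) (norm_smul_le _ _)

section Gradient

variable {𝕜 E : Type*} [RCLike 𝕜] [NormedAddCommGroup E] [InnerProductSpace 𝕜 E] [CompleteSpace E]

theorem norm_gradient_eq_norm_fderiv (f : E → 𝕜) (x : E) :
    ‖gradient f x‖ = ‖fderiv 𝕜 f x‖ :=
  LinearIsometryEquiv.norm_map _ _

theorem norm_gradient_sub_gradient_eq (f : E → 𝕜) (x y : E) :
    ‖gradient f x - gradient f y‖ = ‖fderiv 𝕜 f x - fderiv 𝕜 f y‖ := by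
  rw [gradient, gradient, ← map_sub, LinearIsometryEquiv.norm_map]

end Gradient

theorem fderiv_sqrt_add_const {E : Type*} [NormedAddCommGroup E] [NormedSpace ℝ E] {f : E → ℝ}
    {x : E} {c : ℝ} (hf : DifferentiableAt ℝ f x) (hx : f x + c ≠ 0) :
    fderiv ℝ (fun z => √(f z + c)) x = (1 / 2 : ℝ) • (√(f x + c))⁻¹ • fderiv ℝ f x := by
  rw [fderiv_sqrt (hf.add_const c) hx, fderiv_add_const, smul_smul, one_div, one_div, mul_inv]

theorem shifted_energy_gradient_lipschitz_general {E : Type*} [NormedAddCommGroup E]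
    [NormedSpace ℝ E] {s : Set E} (hs : Convex ℝ s) {f : E → ℝ}
    (hf : ∀ x ∈ s, DifferentiableAt ℝ f x) {c γ a L : ℝ} (ha : 0 < a)
    (hLip : ∀ x ∈ s, ∀ y ∈ s, ‖fderiv ℝ f x - fderiv ℝ f y‖ ≤ L * ‖x - y‖)
    (hderiv : ∀ x ∈ s, ‖fderiv ℝ f x‖ ≤ γ) (hbound : ∀ x ∈ s, a ≤ f x + c) :
    ∀ x ∈ s, ∀ y ∈ s,
      ‖fderiv ℝ (fun z => √(f z + c)) x - fderiv ℝ (fun z => √(f z + c)) y‖ ≤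
        1 / (2 * √a) * (L + γ ^ 2 / (2 * a)) * ‖x - y‖ := by
  intro x hx y hy
  have hpos : ∀ z ∈ s, f z + c ≠ 0 := fun z hz => (ha.trans_le (hbound z hz)).ne'
  have hf_lip : |f x - f y| ≤ γ * ‖x - y‖ :=
    hs.norm_image_sub_le_of_norm_fderiv_le hf hderiv hy hx
  have hweight : ‖(√(f x + c))⁻¹‖ ≤ (√a)⁻¹ := by
    rw [norm_inv, Real.norm_of_nonneg (Real.sqrt_nonneg _)]
    gcongr
    exact hbound x hx
  have hweight_lip : ‖(√(f x + c))⁻¹ - (√(f y + c))⁻¹‖ ≤ γ * ‖x - y‖ / (2 * a * √a) := by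
    refine (abs_inv_sqrt_sub_inv_sqrt_le ha (hbound x hx) (hbound y hy)).trans ?_
    rw [add_sub_add_right_eq_sub]
    gcongr
  rw [fderiv_sqrt_add_const (hf x hx) (hpos x hx), fderiv_sqrt_add_const (hf y hy) (hpos y hy),
    ← smul_sub, norm_smul, Real.norm_of_nonneg one_half_pos.le]
  calc 1 / 2 * ‖(√(f x + c))⁻¹ • fderiv ℝ f x - (√(f y + c))⁻¹ • fderiv ℝ f y‖
      ≤ 1 / 2 * (‖(√(f x + c))⁻¹‖ * ‖fderiv ℝ f x - fderiv ℝ f y‖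
          + ‖(√(f x + c))⁻¹ - (√(f y + c))⁻¹‖ * ‖fderiv ℝ f y‖) := by
        gcongr
        exact norm_smul_sub_smul_le _ _ _ _
    _ ≤ 1 / 2 * ((√a)⁻¹ * (L * ‖x - y‖) + γ * ‖x - y‖ / (2 * a * √a) * γ) := by
        gcongr
        · exact hLip x hx y hy
        · exact (norm_nonneg _).trans hweight_lip
        · exact hderiv y hy
    _ = 1 / (2 * √a) * (L + γ ^ 2 / (2 * a)) * ‖x - y‖ := by
        field_simp

/-- Smoothness of the shifted energy `F(x) = √(f(x)+c)`: if `∇f` is `L`-Lipschitz,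
`‖∇f‖ ≤ γ`, and `f + c ≥ a > 0`, then `∇F` is Lipschitz with constant
`L_F = (1/(2√a)) (L + γ²/(2a))`. -/
theorem shifted_energy_gradient_lipschitz {n : ℕ} (f : EuclideanSpace ℝ (Fin n) → ℝ)
    (hf : Differentiable ℝ f) (c γ a L : ℝ) (hγ : 0 < γ) (ha : 0 < a)
    (hLip : ∀ x y : EuclideanSpace ℝ (Fin n), ‖gradient f x - gradient f y‖ ≤ L * ‖x - y‖)
    (hgrad : ∀ x, ‖gradient f x‖ ≤ γ)
    (hbound : ∀ x, a ≤ f x + c) :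
    ∀ x y : EuclideanSpace ℝ (Fin n),
      ‖gradient (fun z => Real.sqrt (f z + c)) x - gradient (fun z => Real.sqrt (f z + c)) y‖ ≤
        (1 / (2 * Real.sqrt a)) * (L + γ ^ 2 / (2 * a)) * ‖x - y‖ := by
  simp only [norm_gradient_sub_gradient_eq, norm_gradient_eq_norm_fderiv] at hLip hgrad ⊢
  exact fun x y => shifted_energy_gradient_lipschitz_general convex_univ (fun z _ => hf z) ha
    (fun u _ v _ => hLip u v) (fun z _ => hgrad z) (fun z _ => hbound z) x trivial y trivial
end
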